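/- Let X be a measurable space equipped with a partial order, μ a probability measure on X, and f, g : X → ℝ nonnegative integrable functions with ∫ f dμ = ∫ g dμ = 1. Assume g is monotone, and assume that for every bounded monotone measurable h : X → ℝ one has ∫ h g dμ ≤ ∫ h f dμ. Then ∫ |g − 1| dμ ≤ ∫ |f − 1| dμ; equivalently, ‖g·μ − μ‖_TV ≤ ‖f·μ − μ‖_TV. -/

import Mathlib

/-!
By `L¹` duality, `∫ |u|` is the largest value of `∫ h * u` over `|h| ≤ 1`, attained at the sign of
`u`. If the sign `h` of `g - k` is monotone, it is an admissible test function in the domination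
hypothesis, so
`∫ |g - k| = ∫ h * g - ∫ h * k ≤ ∫ h * f - ∫ h * k = ∫ h * (f - k) ≤ ∫ |f - k|`.
Total variation censoring is the case `k = 1`.
-/

open MeasureTheory

section Sign

variable {R : Type*} [Ring R]

theorem monotone_signType_cast [PartialOrder R] [IsOrderedRing R] :
    Monotone ((↑) : SignType → R) := by
  intro s t hst
  have h_neg : (-1 : R) ≤ 1 := neg_le_self zero_le_one
  cases s <;> cases t <;> first | exact absurd hst (by decide) | simp [h_neg]

theorem abs_signType_cast_le_one [LinearOrder R] [IsOrderedRing R] (s : SignType) :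
    |(s : R)| ≤ 1 := by
  cases s <;> simp

theorem measurable_coe_sign : Measurable fun x : ℝ ↦ (SignType.sign x : ℝ) :=
  (monotone_signType_cast.comp SignType.sign.monotone).measurable

end Sign

section Duality

variable {X : Type*} [MeasurableSpace X] {μ : Measure X}

theorem integral_mul_le_integral_abs {h u : X → ℝ} (hu : Integrable u μ)
    (hh : ∀ᵐ x ∂μ, |h x| ≤ 1) : ∫ x, h x * u x ∂μ ≤ ∫ x, |u x| ∂μ := by
  refine (Real.le_norm_self _).trans (norm_integral_le_of_norm_le hu.abs ?_)
  filter_upwards [hh] with x hx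
  rw [Real.norm_eq_abs, abs_mul]
  exact mul_le_of_le_one_left (abs_nonneg _) hx

theorem integral_abs_sub_le_of_integral_sign_mul_le {f g k : X → ℝ}
    (hf : Integrable f μ) (hg : Integrable g μ) (hk : Integrable k μ)
    (hgf : ∫ x, (SignType.sign (g x - k x) : ℝ) * g x ∂μ ≤
      ∫ x, (SignType.sign (g x - k x) : ℝ) * f x ∂μ) :
    ∫ x, |g x - k x| ∂μ ≤ ∫ x, |f x - k x| ∂μ := by
  set h : X → ℝ := fun x ↦ SignType.sign (g x - k x)
  have h_bound : ∀ᵐ x ∂μ, |h x| ≤ 1 := .of_forall fun _ ↦ abs_signType_cast_le_one _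
  have h_meas : AEStronglyMeasurable h μ :=
    (measurable_coe_sign.comp_aemeasurable (hg.sub hk).aemeasurable).aestronglyMeasurable
  have h_mul {u : X → ℝ} (hu : Integrable u μ) : Integrable (fun x ↦ h x * u x) μ :=
    hu.bdd_mul h_meas h_bound
  calc ∫ x, |g x - k x| ∂μ
      = ∫ x, (h x * g x - h x * k x) ∂μ := by simp only [← sign_mul_self, mul_sub, h]
    _ = ∫ x, h x * g x ∂μ - ∫ x, h x * k x ∂μ := integral_sub (h_mul hg) (h_mul hk)
    _ ≤ ∫ x, h x * f x ∂μ - ∫ x, h x * k x ∂μ := sub_le_sub_right hgf _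
    _ = ∫ x, h x * (f x - k x) ∂μ := by simp only [mul_sub, integral_sub (h_mul hf) (h_mul hk)]
    _ ≤ ∫ x, |f x - k x| ∂μ := integral_mul_le_integral_abs (hf.sub hk) h_bound

end Duality

-- The sign of `g - k` is monotone when `g - k` is, and also when `0 < k` and the likelihood ratio
-- `g / k` is monotone.
theorem tv_censoring_general {X : Type*} [MeasurableSpace X] [Preorder X] {μ : Measure X}
    {f g k : X → ℝ} (hg : Measurable g) (hk : Measurable k)
    (hfint : Integrable f μ) (hgint : Integrable g μ) (hkint : Integrable k μ)
    (hmono : Monotone fun x ↦ SignType.sign (g x - k x))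
    (hdom : ∀ h : X → ℝ, Measurable h → Monotone h → (∃ C : ℝ, ∀ x, |h x| ≤ C) →
      ∫ x, h x * g x ∂μ ≤ ∫ x, h x * f x ∂μ) :
    ∫ x, |g x - k x| ∂μ ≤ ∫ x, |f x - k x| ∂μ :=
  integral_abs_sub_le_of_integral_sign_mul_le hfint hgint hkint <|
    hdom _ (measurable_coe_sign.comp (hg.sub hk)) (monotone_signType_cast.comp hmono)
      ⟨1, fun _ ↦ abs_signType_cast_le_one _⟩

theorem tv_censoring
    {X : Type*} [MeasurableSpace X] [PartialOrder X]
    (μ : Measure X) [IsProbabilityMeasure μ]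
    (f g : X → ℝ) (hf : Measurable f) (hg : Measurable g)
    (hf0 : ∀ x, 0 ≤ f x) (hg0 : ∀ x, 0 ≤ g x)
    (hfint : Integrable f μ) (hgint : Integrable g μ)
    (hf1 : ∫ x, f x ∂μ = 1) (hg1 : ∫ x, g x ∂μ = 1)
    (hgmono : Monotone g)
    (hdom : ∀ h : X → ℝ, Measurable h → Monotone h → (∃ C : ℝ, ∀ x, |h x| ≤ C) →
      ∫ x, h x * g x ∂μ ≤ ∫ x, h x * f x ∂μ) :
    ∫ x, |g x - 1| ∂μ ≤ ∫ x, |f x - 1| ∂μ :=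
  tv_censoring_general hg measurable_const hfint hgint (integrable_const 1)
    (SignType.sign.monotone.comp fun _ _ hxy ↦ sub_le_sub_right (hgmono hxy) 1) hdom
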